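/- Let α, β, λ > 0 and let F be the EEP(α,β,λ) cumulative distribution function. Then e^{βx}·(1 − F(x)) tends to αλ e^{−λ}/(1 − e^{−λ}) as x tends to +∞; in particular 1 − F(x) = O(e^{−βx}) as x → ∞, so the upper tail of EEP(α,β,λ) behaves like that of the exponential distribution. -/

import Mathlib

/-!
With `t = exp (-β x)` and `g t = exp (-λ (1 - t) ^ α)`, the tail is
`1 - F x = (g t - g 0) / (1 - exp (-λ))` for `x ≥ 0`. Hence `exp (β x) * (1 - F x)` is the
difference quotient of `g` at `0`, divided by `1 - exp (-λ)`. As `x → ∞` we have `t → 0` with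
`t ≠ 0`, so the limit is `g' 0 / (1 - exp (-λ))`, where `g' 0 = α λ exp (-λ)`.
-/

open Real Set Filter Topology

/-- The EEP(α,β,λ) cumulative distribution function. -/
noncomputable def eepCdf (α β lam : ℝ) (x : ℝ) : ℝ :=
  if 0 ≤ x then
    (1 - Real.exp (-lam * (1 - Real.exp (-β * x)) ^ α)) / (1 - Real.exp (-lam))
  else 0

lemma hasDerivAt_exp_neg_mul_one_sub_rpow (α lam : ℝ) :
    HasDerivAt (fun t : ℝ => Real.exp (-lam * (1 - t) ^ α))
      (α * lam * Real.exp (-lam)) 0 := by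
  have h1 : HasDerivAt (fun t : ℝ => 1 - t) (-1) 0 := by
    simpa using (hasDerivAt_id (0 : ℝ)).const_sub 1
  have h2 := ((h1.rpow_const (p := α) (Or.inl (by norm_num))).const_mul (-lam)).exp
  convert h2 using 1
  simp only [sub_zero, Real.one_rpow]
  ring_nf

theorem eep_cdf_upper_tail (α β lam : ℝ)
    (hα : 0 < α) (hβ : 0 < β) (hlam : 0 < lam) :
    Filter.Tendsto (fun x : ℝ => Real.exp (β * x) * (1 - eepCdf α β lam x))
      Filter.atTop
      (nhds (α * lam * Real.exp (-lam) / (1 - Real.exp (-lam)))) := by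
  have hslope := (hasDerivAt_exp_neg_mul_one_sub_rpow α lam).tendsto_slope
  have ht : Tendsto (fun x : ℝ => Real.exp (-β * x)) atTop (𝓝[≠] 0) := by
    refine tendsto_nhdsWithin_iff.2 ⟨?_, Eventually.of_forall fun x => (Real.exp_pos _).ne'⟩
    exact Real.tendsto_exp_atBot.comp (tendsto_id.const_mul_atTop_of_neg (by linarith))
  have hne : 1 - Real.exp (-lam) ≠ 0 :=
    (sub_pos.2 (Real.exp_lt_one_iff.2 (by linarith))).ne'
  refine ((hslope.comp ht).div_const (1 - Real.exp (-lam))).congr' ?_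
  filter_upwards [eventually_ge_atTop 0] with x hx
  have hinv : Real.exp (β * x) = (Real.exp (-β * x))⁻¹ := by
    rw [← Real.exp_neg]
    ring_nf
  simp only [Function.comp_apply, slope_def_field, eepCdf, if_pos hx, hinv, sub_zero,
    Real.one_rpow, mul_one]
  field_simp
  ring
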